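/- Let $A \subset \mathbb{R}$ and let $d \ge 5$ be an integer. Set $E = A^{d-4} \times (\Delta(A^2))^2 \subset \mathbb{R}^{d-3}$ and $F = A^{d-4} \times (-(\Delta(A^2))^2) \subset \mathbb{R}^{d-3}$, where $(\Delta(A^2))^2 = \{t^2 : t \in \Delta(A \times A)\}$ and $-(\Delta(A^2))^2 = \{-t^2 : t \in \Delta(A \times A)\}$. Then $\{P(x-y) : x \in E, y \in F\} = \{t^2 : t \in \Delta(A^d)\}$, where $P(x) = x_1^2 + \cdots + x_{d-4}^2 + x_{d-3}$ for $x \in \mathbb{R}^{d-3}$. -/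

import Mathlib

/-- The distance set `Δ(E) = {|x - y| : x, y ∈ E}` of a set `E ⊆ ℝⁿ`. -/
def distSet {n : ℕ} (E : Set (EuclideanSpace ℝ (Fin n))) : Set ℝ :=
  {t : ℝ | ∃ x ∈ E, ∃ y ∈ E, dist x y = t}

/-- The `n`-fold Cartesian product `Aⁿ ⊆ ℝⁿ` of a set `A ⊆ ℝ`. -/
def prodSet (A : Set ℝ) (n : ℕ) : Set (EuclideanSpace ℝ (Fin n)) :=
  {x | ∀ i, x i ∈ A}

/-- The parabolic polynomial `P(x) = x₁² + ⋯ + x_{n-1}² + x_n` on `ℝⁿ`. -/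
def parab (n : ℕ) (x : EuclideanSpace ℝ (Fin n)) : ℝ :=
  ∑ i : Fin n, if (i : ℕ) < n - 1 then x i ^ 2 else x i

/-!
The set of squared distances `(Δ(A^n))²` is the `n`-fold Minkowski sum of
`{(a - b)² : a, b ∈ A}`, so `(Δ(A^(m+n)))² = (Δ(A^m))² + (Δ(A^n))²`. Since `P` is the squared norm
of the first coordinates plus the last coordinate, `P(U × S - U × T) = (Δ(U))² + (S - T)`; for
`S = (Δ(A^k))²` and `T = -(Δ(A^l))²` the difference `S - T` is again a sum of sets of squared
distances.
-/

section SquaredDistances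

open scoped Pointwise

/-- The set `(Δ(E))²` of squared distances between points of `E`. -/
def sqDistSet {n : ℕ} (E : Set (EuclideanSpace ℝ (Fin n))) : Set ℝ :=
  (· ^ 2) '' distSet E

/-- The set `{(a - b)² : a, b ∈ A}`, the contribution of one coordinate to the squared distances
in a power of `A`. -/
def sqDiffSet (A : Set ℝ) : Set ℝ :=
  Set.image2 (fun a b => (a - b) ^ 2) A A

theorem mem_sqDistSet {n : ℕ} {E : Set (EuclideanSpace ℝ (Fin n))} {u : ℝ} :
    u ∈ sqDistSet E ↔ ∃ t ∈ distSet E, u = t ^ 2 := by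
  simp only [sqDistSet, Set.mem_image, eq_comm]

theorem sqDistSet_eq_image2 {n : ℕ} (E : Set (EuclideanSpace ℝ (Fin n))) :
    sqDistSet E = Set.image2 (fun x y => dist x y ^ 2) E E :=
  Set.image_image2 dist (· ^ 2)

theorem sqDistSet_prodSet (A : Set ℝ) (n : ℕ) :
    sqDistSet (prodSet A n) = ∑ _i : Fin n, sqDiffSet A := by
  ext u
  rw [sqDistSet_eq_image2, Set.mem_fintype_sum]
  constructor
  · rintro ⟨x, hx, y, hy, rfl⟩
    refine ⟨fun i => (x i - y i) ^ 2, fun i => ⟨x i, hx i, y i, hy i, rfl⟩, ?_⟩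
    simp only [EuclideanSpace.dist_sq_eq, Real.dist_eq, sq_abs]
  · rintro ⟨g, hg, rfl⟩
    choose a ha b hb hab using hg
    refine ⟨WithLp.toLp 2 a, ha, WithLp.toLp 2 b, hb, ?_⟩
    simp only [EuclideanSpace.dist_sq_eq, Real.dist_eq, sq_abs, hab]

theorem sqDistSet_prodSet_add (A : Set ℝ) (m n : ℕ) :
    sqDistSet (prodSet A (m + n)) = sqDistSet (prodSet A m) + sqDistSet (prodSet A n) := by
  simp only [sqDistSet_prodSet, Fin.sum_univ_add]

/-- The projection `ℝ^(m+1) → ℝ^m` that forgets the last coordinate. -/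
def euclideanInit {m : ℕ} (x : EuclideanSpace ℝ (Fin (m + 1))) : EuclideanSpace ℝ (Fin m) :=
  WithLp.toLp 2 fun i => x i.castSucc

/-- The Cartesian product `U × S ⊆ ℝ^(m+1)` of `U ⊆ ℝ^m` and `S ⊆ ℝ`, the factor `S` being the last
coordinate. -/
def snocProd {m : ℕ} (U : Set (EuclideanSpace ℝ (Fin m))) (S : Set ℝ) :
    Set (EuclideanSpace ℝ (Fin (m + 1))) :=
  {x | euclideanInit x ∈ U ∧ x (Fin.last m) ∈ S}

theorem exists_mem_snocProd {m : ℕ} {U : Set (EuclideanSpace ℝ (Fin m))} {S : Set ℝ}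
    {u : EuclideanSpace ℝ (Fin m)} {s : ℝ} (hu : u ∈ U) (hs : s ∈ S) :
    ∃ x ∈ snocProd U S, euclideanInit x = u ∧ x (Fin.last m) = s := by
  let x : EuclideanSpace ℝ (Fin (m + 1)) := WithLp.toLp 2 (Fin.snoc (α := fun _ => ℝ) u s)
  have init_x : euclideanInit x = u := by ext i; simp [euclideanInit, x]
  have last_x : x (Fin.last m) = s := by simp [x]
  exact ⟨x, ⟨init_x ▸ hu, last_x ▸ hs⟩, init_x, last_x⟩

theorem snocProd_prodSet (A : Set ℝ) (m : ℕ) (S : Set ℝ) :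
    snocProd (prodSet A m) S =
      {x | (∀ i : Fin (m + 1), (i : ℕ) < m → x i ∈ A) ∧ x (Fin.last m) ∈ S} := by
  ext x
  simp [snocProd, prodSet, euclideanInit, Fin.forall_fin_succ']

theorem parab_succ_sub {m : ℕ} (x y : EuclideanSpace ℝ (Fin (m + 1))) :
    parab (m + 1) (x - y) =
      dist (euclideanInit x) (euclideanInit y) ^ 2 + (x (Fin.last m) - y (Fin.last m)) := by
  simp [parab, euclideanInit, Fin.sum_univ_castSucc, EuclideanSpace.dist_sq_eq, Real.dist_eq]

theorem parab_image_snocProd_sub {m : ℕ} (U : Set (EuclideanSpace ℝ (Fin m))) (S T : Set ℝ) :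
    Set.image2 (fun x y => parab (m + 1) (x - y)) (snocProd U S) (snocProd U T) =
      sqDistSet U + (S - T) := by
  rw [sqDistSet_eq_image2]
  apply Set.Subset.antisymm
  · rintro _ ⟨x, ⟨hxU, hxS⟩, y, ⟨hyU, hyT⟩, rfl⟩
    exact ⟨_, ⟨_, hxU, _, hyU, rfl⟩, _, ⟨_, hxS, _, hyT, rfl⟩, (parab_succ_sub x y).symm⟩
  · rintro _ ⟨_, ⟨u, hu, v, hv, rfl⟩, _, ⟨s, hs, t, ht, rfl⟩, rfl⟩
    obtain ⟨x, hx, rfl, rfl⟩ := exists_mem_snocProd hu hs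
    obtain ⟨y, hy, rfl, rfl⟩ := exists_mem_snocProd hv ht
    exact ⟨x, hx, y, hy, parab_succ_sub x y⟩

theorem parab_image_eq_sq_distSet_general (A : Set ℝ) (m k l : ℕ) :
    Set.image2 (fun x y => parab (m + 1) (x - y))
        (snocProd (prodSet A m) (sqDistSet (prodSet A k)))
        (snocProd (prodSet A m) (-sqDistSet (prodSet A l))) =
      sqDistSet (prodSet A (m + k + l)) := by
  rw [parab_image_snocProd_sub, sub_neg_eq_add, sqDistSet_prodSet_add, sqDistSet_prodSet_add,
    add_assoc]

end SquaredDistances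

theorem parab_image_eq_sq_distSet (d : ℕ) (hd : 5 ≤ d) (A : Set ℝ)
    (E F : Set (EuclideanSpace ℝ (Fin (d - 3))))
    (hE : E = {x | (∀ i : Fin (d - 3), (i : ℕ) < d - 4 → x i ∈ A) ∧
      ∃ t ∈ distSet (prodSet A 2), x ⟨d - 4, by omega⟩ = t ^ 2})
    (hF : F = {x | (∀ i : Fin (d - 3), (i : ℕ) < d - 4 → x i ∈ A) ∧
      ∃ t ∈ distSet (prodSet A 2), x ⟨d - 4, by omega⟩ = -t ^ 2}) :
    {u : ℝ | ∃ x ∈ E, ∃ y ∈ F, parab (d - 3) (x - y) = u} =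
      {u : ℝ | ∃ t ∈ distSet (prodSet A d), u = t ^ 2} := by
  obtain ⟨m, rfl⟩ : ∃ m, d = m + 2 + 2 := ⟨d - 4, by omega⟩
  have hE' : E = snocProd (prodSet A m) (sqDistSet (prodSet A 2)) := by
    simp only [hE, snocProd_prodSet, mem_sqDistSet]
    rfl
  have hF' : F = snocProd (prodSet A m) (-sqDistSet (prodSet A 2)) := by
    simp only [hF, snocProd_prodSet, Set.mem_neg, mem_sqDistSet, neg_eq_iff_eq_neg]
    rfl
  calc {u : ℝ | ∃ x ∈ E, ∃ y ∈ F, parab (m + 1) (x - y) = u}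
      = sqDistSet (prodSet A (m + 2 + 2)) := by
        rw [hE', hF']
        exact parab_image_eq_sq_distSet_general A m 2 2
    _ = {u : ℝ | ∃ t ∈ distSet (prodSet A (m + 2 + 2)), u = t ^ 2} :=
        Set.ext fun _ => mem_sqDistSet
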